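/- Let φ ∈ C(X). Then for all α ∈ ℝ, F(α) ≤ lF(α) ≤ uF(α) ≤ S(α), where F(α) = h_top(K_α^φ) is the fine entropy spectrum for Birkhoff averages, lF and uF are the lower and upper coarse spectra, and S(α) = inf_{q∈ℝ} (P(qφ) − qα). -/

import Mathlib

/-!
The inequality `F ≤ lF` holds because every point of `K_α` lies in `G_n(U)` for all large `n`. Thus
`K_α` is the increasing union over `m` of the sets of points lying in `G_n(U)` for all `n ≥ m`. If
`liminf (1/n) log Λ_n^δ(U) < s`, each of these sets is covered by Bowen balls of one well chosen
length with arbitrarily small total weight `Λ_n^δ(U) e^{-ns}`, and the countable union of the covers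
shows that the Carathéodory sum of `K_α` vanishes (`mP_Kbirk_eq_zero`).

The inequality `lF ≤ uF` is `liminf ≤ limsup`.

The inequality `uF ≤ S` rests on the fact that on the compact invariant set `X` the pressure defined
by Bowen balls of variable length dominates the growth rate of covers by sets of the same length `n`.
If `s > P(qφ)`, compactness gives a finite cover `Γ` of `X` by Bowen balls of total weight at
most `1` (`exists_finite_cover_of_mP_eq_zero`). Following an orbit through successive elements of `Γ`
until time `n` is passed encodes it by a string; since the strings form a prefix code, their total
weight is still at most `1`. Strings met by points with `S_n(qφ) ≈ nqα` have weight at least about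
`e^{n(qα - s)}`, so there are at most about `e^{n(s - qα)}` of them. The induction
`exists_small_cover` carries out this count without naming the strings, and `limsup_elogn_Lam_le`
converts it into a bound for `Λ_n^δ(U)`.
-/

open MeasureTheory Filter Set Topology
open scoped ENNReal

noncomputable section

namespace Multifractal

variable {X : Type*} [MetricSpace X]

/-- The Birkhoff sum `S_n φ(x) = ∑_{k<n} φ(f^k x)`. -/
def birk (f : X → X) (φ : X → ℝ) (n : ℕ) (x : X) : ℝ :=
  ∑ k ∈ Finset.range n, φ (f^[k] x)

/-- The Bowen ball `B(x,n,δ)`. -/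
def bowenBall (f : X → X) (x : X) (n : ℕ) (δ : ℝ) : Set X :=
  {y | ∀ k < n, dist (f^[k] x) (f^[k] y) < δ}

/-- A countable cover of `Z` by Bowen balls of order at least `N` and radius `δ`,
with centres in `Z`; this is the collection `P(Z,N,δ)`. -/
def IsBowenCover (f : X → X) (Z : Set X) (N : ℕ) (δ : ℝ) (E : Set (X × ℕ)) : Prop :=
  E.Countable ∧ (∀ p ∈ E, p.1 ∈ Z ∧ N ≤ p.2) ∧ Z ⊆ ⋃ p ∈ E, bowenBall f p.1 p.2 δ

/-- The weighted sum `∑_i exp (w (x_i, n_i))` over a cover `E`. -/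
def coverSum (E : Set (X × ℕ)) (w : X × ℕ → ℝ) : ℝ≥0∞ :=
  ∑' p : E, ENNReal.ofReal (Real.exp (w ↑p))

/-- The set function `m_P(Z,s,φ,δ) = lim_{N→∞} m_P(Z,s,φ,N,δ)` (the limit in `N` is a
supremum, by monotonicity). -/
def mP (f : X → X) (Z : Set X) (s : ℝ) (φ : X → ℝ) (δ : ℝ) : ℝ≥0∞ :=
  ⨆ N : ℕ, ⨅ (E : Set (X × ℕ)) (_ : IsBowenCover f Z N δ E),
    coverSum E fun p => -(p.2 : ℝ) * s + birk f φ p.2 p.1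

/-- `P_Z(φ,δ) = inf {s | m_P(Z,s,φ,δ) = 0}`, as an extended real. -/
def pressureAt (f : X → X) (Z : Set X) (φ : X → ℝ) (δ : ℝ) : EReal :=
  sInf ((fun s : ℝ => (s : EReal)) '' {s : ℝ | mP f Z s φ δ = 0})

/-- The topological pressure `P_Z(φ) = lim_{δ→0} P_Z(φ,δ)` (the limit is a supremum, by
monotonicity in `δ`). -/
def pressure (f : X → X) (Z : Set X) (φ : X → ℝ) : EReal :=
  ⨆ (δ : ℝ) (_ : 0 < δ), pressureAt f Z φ δ

/-- Finite topological entropy: `h_top(X) = P_X(0) < ∞`. -/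
def FiniteHtop (f : X → X) : Prop := pressure f univ (fun _ => 0) ≠ ⊤

/-- The set function `m_u(Z,s,δ)` used to define the `u`-dimension. -/
def mU (f : X → X) (u : X → ℝ) (Z : Set X) (s : ℝ) (δ : ℝ) : ℝ≥0∞ :=
  ⨆ N : ℕ, ⨅ (E : Set (X × ℕ)) (_ : IsBowenCover f Z N δ E),
    coverSum E fun p => -s * birk f u p.2 p.1

/-- `dim_u(Z,δ) = inf {s | m_u(Z,s,δ) = 0}`. -/
def dimuAt (f : X → X) (u : X → ℝ) (Z : Set X) (δ : ℝ) : EReal :=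
  sInf ((fun s : ℝ => (s : EReal)) '' {s : ℝ | mU f u Z s δ = 0})

/-- The `u`-dimension `dim_u Z = lim_{δ→0} dim_u(Z,δ)`, with `dim_u ∅ = -∞`. -/
def dimu (f : X → X) (u : X → ℝ) (Z : Set X) : EReal :=
  ⨆ (δ : ℝ) (_ : 0 < δ), dimuAt f u Z δ

/-- Property (P): for every `δ>0` there exist covers `E_N ∈ P(X,N,δ)` with
`lim_{N→∞} inf_{(x,n) ∈ E_N} S_n u(x) = +∞`. -/
def PropP (f : X → X) (u : X → ℝ) : Prop :=
  ∀ δ : ℝ, 0 < δ → ∃ E : ℕ → Set (X × ℕ),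
    (∀ N, IsBowenCover f univ N δ (E N)) ∧
    ∀ C : ℝ, ∃ N₀ : ℕ, ∀ N ≥ N₀, ∀ p ∈ E N, C ≤ birk f u p.2 p.1

/-- The ratio level set `K_α = {x | S_nφ(x)/S_nψ(x) → α}`. -/
def Kratio (f : X → X) (φ ψ : X → ℝ) (α : ℝ) : Set X :=
  {x | Tendsto (fun n : ℕ => birk f φ n x / birk f ψ n x) atTop (𝓝 α)}

/-- The Birkhoff average level set `K_α^φ = {x | (1/n) S_nφ(x) → α}`. -/
def Kbirk (f : X → X) (φ : X → ℝ) (α : ℝ) : Set X :=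
  {x | Tendsto (fun n : ℕ => birk f φ n x / n) atTop (𝓝 α)}

/-- The set `X̂` of points with `liminf S_nψ(x) > 0` and `liminf (1/n) S_n u(x) > 0`. -/
def Xhat (f : X → X) (ψ u : X → ℝ) : Set X :=
  {x | 0 < Filter.liminf (fun n : ℕ => ((birk f ψ n x : ℝ) : EReal)) atTop ∧
       0 < Filter.liminf (fun n : ℕ => ((birk f u n x / n : ℝ) : EReal)) atTop}

/-- The set of points where `liminf (1/n) S_n v(x) > 0`. -/
def liminfPosSet (f : X → X) (v : X → ℝ) : Set X :=
  {x | 0 < Filter.liminf (fun n : ℕ => ((birk f v n x / n : ℝ) : EReal)) atTop}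

/-- The potential `q(φ - αψ) - tu`. -/
def potential (φ ψ u : X → ℝ) (α q t : ℝ) : X → ℝ :=
  fun x => q * (φ x - α * ψ x) - t * u x

/-- `T_α(q) = inf {t | P_Z(q(φ-αψ) - tu) ≤ 0}` for the system restricted to `Z`. -/
def TspecOn (f : X → X) (Z : Set X) (φ ψ u : X → ℝ) (α q : ℝ) : EReal :=
  sInf ((fun t : ℝ => (t : EReal)) '' {t : ℝ | pressure f Z (potential φ ψ u α q t) ≤ 0})

/-- The predicted spectrum `S(α) = inf_q T_α(q)` for the system restricted to `Z`. -/
def SspecOn (f : X → X) (Z : Set X) (φ ψ u : X → ℝ) (α : ℝ) : EReal :=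
  ⨅ q : ℝ, TspecOn f Z φ ψ u α q

/-- `T_α(q) = inf {t | P(q(φ-αψ) - tu) ≤ 0}`. -/
def Tspec (f : X → X) (φ ψ u : X → ℝ) (α q : ℝ) : EReal := TspecOn f univ φ ψ u α q

/-- The thermodynamically predicted spectrum `S(α) = inf_q T_α(q)`. -/
def Sspec (f : X → X) (φ ψ u : X → ℝ) (α : ℝ) : EReal := SspecOn f univ φ ψ u α

/-- `T_0(q) = inf{t | P(qφ - tu) ≤ 0}` (the non-mixed case `u = ψ`). -/
def T0fun (f : X → X) (φ u : X → ℝ) (q : ℝ) : EReal :=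
  sInf ((fun t : ℝ => (t : EReal)) ''
    {t : ℝ | pressure f univ (fun x => q * φ x - t * u x) ≤ 0})

/-- `Q = {q | T_0(q) < ∞}`. -/
def Qset (f : X → X) (φ u : X → ℝ) : Set ℝ := {q | T0fun f φ u q < ⊤}

/-- `Ĩ = ⋃_{q ∈ int Q} J(q)`: `α ∈ Ĩ` iff `α` is the slope of a subtangent line to the
convex function `T_0` at some `q` in the interior of `Q`. -/
def Itilde (f : X → X) (φ u : X → ℝ) : Set ℝ :=
  {α | ∃ q ∈ interior (Qset f φ u), ∀ q' : ℝ,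
    T0fun f φ u q + ((α * (q' - q) : ℝ) : EReal) ≤ T0fun f φ u q'}

/-- The approximate level set `G_n(U)`. -/
def Gset (f : X → X) (φ : X → ℝ) (n : ℕ) (U : Set ℝ) : Set X :=
  {x | birk f φ n x / n ∈ U}

/-- `Λ_n^δ(U)`: the minimal cardinality of a set `E` with `B(E,n,δ) ⊇ G_n(U)`. -/
def Lam (f : X → X) (φ : X → ℝ) (n : ℕ) (δ : ℝ) (U : Set ℝ) : ℕ :=
  sInf {m : ℕ | ∃ E : Finset X, E.card = m ∧ Gset f φ n U ⊆ ⋃ x ∈ E, bowenBall f x n δ}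

/-- `(1/n) log m` as an extended real, with value `-∞` when `m = 0`. -/
def elogn (m n : ℕ) : EReal :=
  if m = 0 then (⊥ : EReal) else ((Real.log m / n : ℝ) : EReal)

/-- The lower coarse spectrum. -/
def lFspec (f : X → X) (φ : X → ℝ) (α : ℝ) : EReal :=
  ⨅ (U : Set ℝ) (_ : U ∈ 𝓝 α), ⨆ (δ : ℝ) (_ : 0 < δ),
    Filter.liminf (fun n : ℕ => elogn (Lam f φ n δ U) n) atTop

/-- The upper coarse spectrum. -/
def uFspec (f : X → X) (φ : X → ℝ) (α : ℝ) : EReal :=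
  ⨅ (U : Set ℝ) (_ : U ∈ 𝓝 α), ⨆ (δ : ℝ) (_ : 0 < δ),
    Filter.limsup (fun n : ℕ => elogn (Lam f φ n δ U) n) atTop

/-- Right derivative of a convex function, as the infimum of difference quotients. -/
def Dplus (g : ℝ → ℝ) (q : ℝ) : ℝ :=
  sInf {m : ℝ | ∃ ε : ℝ, 0 < ε ∧ m = (g (q + ε) - g q) / ε}

/-- Left derivative of a convex function, as the supremum of difference quotients. -/
def Dminus (g : ℝ → ℝ) (q : ℝ) : ℝ :=
  sSup {m : ℝ | ∃ ε : ℝ, 0 < ε ∧ m = (g q - g (q - ε)) / ε}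

section Measures

variable [MeasurableSpace X]

/-- The set `M_f(X)` of `f`-invariant Borel probability measures. -/
def invProb (f : X → X) : Set (Measure X) :=
  {μ | IsProbabilityMeasure μ ∧ MeasurePreserving f μ μ}

/-- The set `M_f^e(X)` of ergodic `f`-invariant Borel probability measures. -/
def ergProb (f : X → X) : Set (Measure X) :=
  {μ | IsProbabilityMeasure μ ∧ Ergodic f μ}

/-- A finite measurable partition of `X`. -/
def IsFinPartition {m : ℕ} (P : Fin m → Set X) : Prop :=
  (∀ i, MeasurableSet (P i)) ∧ (∀ i j, i ≠ j → Disjoint (P i) (P j)) ∧ (⋃ i, P i) = univ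

/-- The entropy `H_μ(P) = ∑_i -μ(P_i) log μ(P_i)` of a finite partition. -/
def partEnt (μ : Measure X) {ι : Type*} [Fintype ι] (P : ι → Set X) : ℝ :=
  ∑ i, -((μ (P i)).toReal * Real.log (μ (P i)).toReal)

/-- The dynamical refinement `⋁_{k<n} f^{-k} P` of a partition. -/
def orbitJoin (f : X → X) {m : ℕ} (P : Fin m → Set X) (n : ℕ) :
    (Fin n → Fin m) → Set X :=
  fun w => ⋂ k : Fin n, f^[(k : ℕ)] ⁻¹' P (w k)

/-- The Kolmogorov–Sinai entropy `h_μ(f)`. -/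
def kolSinai (f : X → X) (μ : Measure X) : ℝ :=
  ⨆ (m : ℕ) (P : Fin m → Set X) (_ : IsFinPartition P),
    ⨅ n : ℕ, partEnt μ (orbitJoin f P (n + 1)) / (n + 1)

/-- The `u`-dimension of a measure: `dim_u μ = inf {dim_u Z | μ(Z) = 1}`. -/
def dimuMeas (f : X → X) (u : X → ℝ) (μ : Measure X) : EReal :=
  sInf {d : EReal | ∃ Z : Set X, μ Z = 1 ∧ d = dimu f u Z}

/-- `μ` is a weak Gibbs measure for `φ` with pressure `Pφ`. -/
def WeakGibbs (f : X → X) (μ : Measure X) (φ : X → ℝ) (Pφ : ℝ) : Prop :=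
  ∀ x : X,
    Tendsto (fun δ : ℝ => Filter.liminf (fun n : ℕ =>
        (((-Real.log ((μ (bowenBall f x n δ)).toReal) + birk f φ n x) / n : ℝ) : EReal)) atTop)
      (𝓝[>] (0 : ℝ)) (𝓝 ((Pφ : EReal))) ∧
    Tendsto (fun δ : ℝ => Filter.limsup (fun n : ℕ =>
        (((-Real.log ((μ (bowenBall f x n δ)).toReal) + birk f φ n x) / n : ℝ) : EReal)) atTop)
      (𝓝[>] (0 : ℝ)) (𝓝 ((Pφ : EReal)))

/-- The level set `K_α^{d_μ}` of points with pointwise dimension `α`. -/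
def KdimSet (μ : Measure X) (α : ℝ) : Set X :=
  {x | Tendsto (fun r : ℝ => Real.log ((μ (Metric.ball x r)).toReal) / Real.log r)
      (𝓝[>] (0 : ℝ)) (𝓝 α)}

end Measures


/-! ### Bowen balls and coarse covering numbers -/

/-- `T` has diameter less than `ε` in the `n`-th Bowen metric. -/
def BowenSmall (f : X → X) (n : ℕ) (ε : ℝ) (T : Set X) : Prop :=
  ∀ y ∈ T, ∀ z ∈ T, ∀ k < n, dist (f^[k] y) (f^[k] z) < ε

lemma isOpen_bowenBall {f : X → X} (hf : Continuous f) (x : X) (n : ℕ) (δ : ℝ) :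
    IsOpen (bowenBall f x n δ) := by
  have h : bowenBall f x n δ
      = ⋂ k ∈ Finset.range n, {y | dist (f^[k] x) (f^[k] y) < δ} := by
    ext y; simp [bowenBall]
  rw [h]
  exact isOpen_biInter_finset fun k _ =>
    isOpen_lt (continuous_const.dist (hf.iterate k)) continuous_const

lemma mem_bowenBall_self (f : X → X) (x : X) (n : ℕ) {δ : ℝ} (hδ : 0 < δ) :
    x ∈ bowenBall f x n δ := fun k _ => by simpa using hδ

lemma bowenSmall_bowenBall (f : X → X) (x : X) (n : ℕ) (δ : ℝ) :
    BowenSmall f n (2 * δ) (bowenBall f x n δ) := fun y hy z hz k hk => by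
  have h1 := hy k hk
  have h2 := hz k hk
  have h3 := dist_triangle_left (f^[k] y) (f^[k] z) (f^[k] x)
  linarith

lemma birk_add (f : X → X) (ψ : X → ℝ) (m n : ℕ) (x : X) :
    birk f ψ (m + n) x = birk f ψ m x + birk f ψ n (f^[m] x) := by
  simp only [birk, Finset.sum_range_add]
  congr 1
  refine Finset.sum_congr rfl fun k _ => ?_
  rw [Nat.add_comm, Function.iterate_add_apply]

lemma birk_const_mul (f : X → X) (φ : X → ℝ) (q : ℝ) (n : ℕ) (x : X) :
    birk f (fun y => q * φ y) n x = q * birk f φ n x := by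
  simp [birk, Finset.mul_sum]

lemma abs_birk_le {f : X → X} {ψ : X → ℝ} {C : ℝ} (hC : ∀ x, |ψ x| ≤ C) (n : ℕ) (x : X) :
    |birk f ψ n x| ≤ n * C := by
  calc |birk f ψ n x| ≤ ∑ k ∈ Finset.range n, |ψ (f^[k] x)| := Finset.abs_sum_le_sum_abs _ _
    _ ≤ ∑ _k ∈ Finset.range n, C := Finset.sum_le_sum fun k _ => hC _
    _ = n * C := by simp

/-- Compactness makes the set in the definition of `Lam` nonempty, so the infimum is attained. -/
lemma exists_finset_card_eq_Lam [CompactSpace X] {f : X → X} (hf : Continuous f) (φ : X → ℝ)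
    (n : ℕ) {δ : ℝ} (hδ : 0 < δ) (U : Set ℝ) :
    ∃ E : Finset X, E.card = Lam f φ n δ U ∧ Gset f φ n U ⊆ ⋃ x ∈ E, bowenBall f x n δ := by
  have hne : {m : ℕ | ∃ E : Finset X, E.card = m ∧
      Gset f φ n U ⊆ ⋃ x ∈ E, bowenBall f x n δ}.Nonempty := by
    obtain ⟨t, ht⟩ := isCompact_univ.elim_finite_subcover (fun x : X => bowenBall f x n δ)
      (fun x => isOpen_bowenBall hf x n δ)
      (fun x _ => mem_iUnion.2 ⟨x, mem_bowenBall_self f x n hδ⟩)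
    exact ⟨t.card, t, rfl, (subset_univ _).trans ht⟩
  exact Nat.sInf_mem hne

lemma Lam_le_card {f : X → X} {φ : X → ℝ} {n : ℕ} {ε : ℝ} {U : Set ℝ} (F : Finset (Set X))
    (hF : ∀ T ∈ F, BowenSmall f n ε T) (hcov : ∀ y ∈ Gset f φ n U, ∃ T ∈ F, y ∈ T) :
    Lam f φ n ε U ≤ F.card := by
  classical
  rcases isEmpty_or_nonempty X with hX | hX
  · exact le_trans (Nat.sInf_le ⟨∅, Finset.card_empty, fun y _ => (hX.false y).elim⟩)
      (Nat.zero_le _)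
  · let g : Set X → X := fun T => if h : T.Nonempty then h.choose else Classical.arbitrary X
    refine le_trans (Nat.sInf_le ⟨F.image g, rfl, fun y hy => ?_⟩) Finset.card_image_le
    obtain ⟨T, hT, hyT⟩ := hcov y hy
    have hne : T.Nonempty := ⟨y, hyT⟩
    have hg : g T ∈ T := by
      simp only [g, dif_pos hne]; exact hne.choose_spec
    exact mem_iUnion₂.2 ⟨g T, Finset.mem_image_of_mem g hT, hF T hT _ hg _ hyT⟩

lemma elogn_le {m n : ℕ} {a : ℝ} (hn : 0 < n) (h : (m : ℝ) ≤ Real.exp (n * a)) :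
    elogn m n ≤ (a : EReal) := by
  unfold elogn
  split_ifs with hm
  · exact bot_le
  · have hm' : (0 : ℝ) < m := by exact_mod_cast Nat.pos_of_ne_zero hm
    have hn' : (0 : ℝ) < n := by exact_mod_cast hn
    rw [EReal.coe_le_coe_iff, div_le_iff₀ hn', mul_comm]
    exact (Real.log_le_iff_le_exp hm').2 h

lemma le_exp_of_elogn_lt {m n : ℕ} {a : ℝ} (hn : 0 < n) (h : elogn m n < (a : EReal)) :
    (m : ℝ) ≤ Real.exp (n * a) := by
  unfold elogn at h
  split_ifs at h with hm
  · simp only [hm, Nat.cast_zero]; positivity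
  · have hm' : (0 : ℝ) < m := by exact_mod_cast Nat.pos_of_ne_zero hm
    have hn' : (0 : ℝ) < n := by exact_mod_cast hn
    rw [EReal.coe_lt_coe_iff, div_lt_iff₀ hn', mul_comm] at h
    exact (Real.log_le_iff_le_exp hm').1 h.le

/-! ### The fine spectrum is at most the lower coarse spectrum -/

/-- Moving the centres of a cover into `Z` at the price of doubling the radius. -/
lemma exists_centres_mem {f : X → X} {n : ℕ} {δ : ℝ} {Z : Set X} (E : Finset X)
    (hE : Z ⊆ ⋃ x ∈ E, bowenBall f x n δ) :
    ∃ E' : Finset X, (∀ x ∈ E', x ∈ Z) ∧ E'.card ≤ E.card ∧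
      Z ⊆ ⋃ x ∈ E', bowenBall f x n (2 * δ) := by
  classical
  rcases Z.eq_empty_or_nonempty with rfl | ⟨z₀, hz₀⟩
  · exact ⟨∅, by simp, by simp, by simp⟩
  · let g : X → X := fun x =>
      if h : (Z ∩ bowenBall f x n δ).Nonempty then h.choose else z₀
    refine ⟨E.image g, ?_, Finset.card_image_le, fun z hz => ?_⟩
    · intro y hy
      obtain ⟨x, -, rfl⟩ := Finset.mem_image.1 hy
      by_cases h : (Z ∩ bowenBall f x n δ).Nonempty
      · simp only [g, dif_pos h]; exact h.choose_spec.1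
      · simp only [g, dif_neg h]; exact hz₀
    · obtain ⟨x, hx, hzx⟩ := mem_iUnion₂.1 (hE hz)
      have h : (Z ∩ bowenBall f x n δ).Nonempty := ⟨z, hz, hzx⟩
      have hg : g x ∈ bowenBall f x n δ := by
        simp only [g, dif_pos h]; exact h.choose_spec.2
      exact mem_iUnion₂.2 ⟨g x, Finset.mem_image_of_mem g hx,
        bowenSmall_bowenBall f x n δ _ hg _ hzx⟩

/-- If `Λ_n^δ(U) ≤ e^{na}` for infinitely many `n`, with `a < s`, then the level set is null for
the Carathéodory measure at exponent `s` and scale `2δ`: every point of the level set eventually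
lies in `G_n(U)`, so `K_α` is a countable union of pieces, each covered cheaply at some time. -/
lemma mP_Kbirk_eq_zero [CompactSpace X] {f : X → X} (hf : Continuous f) {φ : X → ℝ} {α : ℝ}
    {U : Set ℝ} (hU : U ∈ 𝓝 α) {δ : ℝ} (hδ : 0 < δ) {a s : ℝ} (has : a < s)
    (hfreq : ∃ᶠ n : ℕ in atTop, elogn (Lam f φ n δ U) n < (a : EReal)) :
    mP f (Kbirk f φ α) s (fun _ => 0) (2 * δ) = 0 := by
  classical
  refine le_antisymm (iSup_le fun N => ?_) bot_le
  refine le_of_forall_pos_le_add fun ε hε => ?_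
  rw [zero_add]
  obtain ⟨ε', hε'pos, hε'sum⟩ := ENNReal.exists_pos_sum_of_countable' hε.ne' ℕ
  have hlim : Tendsto (fun n : ℕ => ENNReal.ofReal (Real.exp (-((n : ℝ) * (s - a))))) atTop (𝓝 0) := by
    rw [← ENNReal.ofReal_zero]
    refine (ENNReal.continuous_ofReal.tendsto _).comp ?_
    refine Real.tendsto_exp_neg_atTop_nhds_zero.comp ?_
    exact tendsto_natCast_atTop_atTop.atTop_mul_const (sub_pos.2 has)
  have hpiece : ∀ m : ℕ, ∃ (n : ℕ) (E : Finset X), N ≤ n ∧ (∀ x ∈ E, x ∈ Kbirk f φ α) ∧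
      {x ∈ Kbirk f φ α | ∀ k ≥ m, birk f φ k x / k ∈ U} ⊆ ⋃ x ∈ E, bowenBall f x n (2 * δ) ∧
      E.card * ENNReal.ofReal (Real.exp (-(n : ℝ) * s)) ≤ ε' m := by
    intro m
    have hev := ((eventually_ge_atTop N).and (eventually_ge_atTop m)).and
      ((eventually_gt_atTop 0).and (hlim.eventually (gt_mem_nhds (hε'pos m))))
    obtain ⟨n, hn, ⟨hN, hm⟩, h0, hsmall⟩ := (hfreq.and_eventually hev).exists
    obtain ⟨E, hEcard, hE⟩ := exists_finset_card_eq_Lam hf φ n hδ U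
    obtain ⟨E', hE'Z, hE'card, hE'⟩ := exists_centres_mem
      (Z := {x ∈ Kbirk f φ α | ∀ k ≥ m, birk f φ k x / k ∈ U}) E
      (fun x hx => hE (hx.2 n hm))
    refine ⟨n, E', hN, fun x hx => (hE'Z x hx).1, hE', ?_⟩
    have hc : (E'.card : ℝ) ≤ Real.exp (n * a) :=
      le_trans (by rw [← hEcard]; exact_mod_cast hE'card) (le_exp_of_elogn_lt h0 hn)
    have hc' : (E'.card : ℝ≥0∞) ≤ ENNReal.ofReal (Real.exp (n * a)) := by
      rw [← ENNReal.ofReal_natCast]; exact ENNReal.ofReal_le_ofReal hc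
    refine le_trans ?_ hsmall.le
    calc (E'.card : ℝ≥0∞) * ENNReal.ofReal (Real.exp (-(n : ℝ) * s))
        ≤ ENNReal.ofReal (Real.exp (n * a)) * ENNReal.ofReal (Real.exp (-(n : ℝ) * s)) := by
          gcongr
      _ = ENNReal.ofReal (Real.exp (-((n : ℝ) * (s - a)))) := by
          rw [← ENNReal.ofReal_mul (Real.exp_pos _).le, ← Real.exp_add]
          congr 2; ring
  choose n E hN hEK hcov hcost using hpiece
  let C : ℕ → Set (X × ℕ) := fun m => ↑((E m).image fun x => (x, n m))
  have hbound : ∀ m, ∑' p : C m, ENNReal.ofReal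
      (Real.exp (-((p : X × ℕ).2 : ℝ) * s + birk f (fun _ => 0) (p : X × ℕ).2 (p : X × ℕ).1))
      ≤ ε' m := by
    intro m
    refine le_trans (le_of_eq ?_) (hcost m)
    have := Finset.tsum_subtype' ((E m).image fun x => (x, n m)) (fun p : X × ℕ =>
      ENNReal.ofReal (Real.exp (-(p.2 : ℝ) * s + birk f (fun _ => 0) p.2 p.1)))
    refine this.trans ?_
    rw [Finset.sum_image (by intro x _ y _ h; exact (Prod.mk.inj h).1)]
    simp [birk]
  refine le_trans (iInf₂_le (⋃ m, C m)
    (show IsBowenCover f (Kbirk f φ α) N (2 * δ) (⋃ m, C m) from ⟨?_, ?_, ?_⟩)) ?_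
  · exact countable_iUnion fun m => (Finset.finite_toSet _).countable
  · intro p hp
    obtain ⟨m, hm⟩ := mem_iUnion.1 hp
    obtain ⟨x, hx, rfl⟩ := Finset.mem_image.1 (Finset.mem_coe.1 hm)
    exact ⟨hEK m x hx, hN m⟩
  · intro x hx
    have hx' : ∀ᶠ k : ℕ in atTop, birk f φ k x / k ∈ U := Tendsto.eventually_mem hx hU
    obtain ⟨m, hm⟩ := eventually_atTop.1 hx'
    obtain ⟨y, hy, hxy⟩ := mem_iUnion₂.1 (hcov m ⟨hx, hm⟩)
    exact mem_iUnion₂.2 ⟨(y, n m), mem_iUnion.2 ⟨m,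
      Finset.mem_coe.2 (Finset.mem_image_of_mem (fun x => (x, n m)) hy)⟩, hxy⟩
  · exact (ENNReal.tsum_iUnion_le_tsum (fun p : X × ℕ => ENNReal.ofReal
      (Real.exp (-(p.2 : ℝ) * s + birk f (fun _ => 0) p.2 p.1))) C).trans
      ((ENNReal.tsum_le_tsum hbound).trans hε'sum.le)

lemma fine_le_lFspec [CompactSpace X] {f : X → X} (hf : Continuous f) (φ : X → ℝ) (α : ℝ) :
    pressure f (Kbirk f φ α) (fun _ => 0) ≤ lFspec f φ α := by
  refine le_iInf₂ fun U hU => iSup₂_le fun δ hδ => ?_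
  refine le_trans ?_ (le_iSup₂ (f := fun (δ : ℝ) (_ : 0 < δ) =>
    Filter.liminf (fun n : ℕ => elogn (Lam f φ n δ U) n) atTop) (δ / 2) (half_pos hδ))
  refine EReal.le_of_forall_lt_iff_le.1 fun s hs => ?_
  obtain ⟨a, ha, has⟩ := EReal.lt_iff_exists_real_btwn.1 hs
  have h := mP_Kbirk_eq_zero hf hU (half_pos hδ) (EReal.coe_lt_coe_iff.1 has)
    (frequently_lt_of_liminf_lt (h := ha))
  rw [mul_div_cancel₀ δ two_ne_zero] at h
  exact sInf_le ⟨s, h, rfl⟩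

lemma lFspec_le_uFspec (f : X → X) (φ : X → ℝ) (α : ℝ) : lFspec f φ α ≤ uFspec f φ α :=
  iInf₂_mono fun _ _ => iSup₂_mono fun _ _ => liminf_le_limsup

/-! ### The upper coarse spectrum is at most the predicted spectrum -/

/-- A scale at which the Carathéodory measure vanishes yields, by compactness, a finite cover of
the whole space with total weight at most one. -/
lemma exists_finite_cover_of_mP_eq_zero [CompactSpace X] {f : X → X} (hf : Continuous f)
    {ψ : X → ℝ} {s δ : ℝ} (h : mP f univ s ψ δ = 0) :
    ∃ Γ : Finset (X × ℕ), (∀ p ∈ Γ, 1 ≤ p.2) ∧ (∀ x, ∃ p ∈ Γ, x ∈ bowenBall f p.1 p.2 δ) ∧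
      ∑ p ∈ Γ, Real.exp (-(p.2 : ℝ) * s + birk f ψ p.2 p.1) ≤ 1 := by
  have h1 : (⨅ (E : Set (X × ℕ)) (_ : IsBowenCover f univ 1 δ E),
      coverSum E fun p => -(p.2 : ℝ) * s + birk f ψ p.2 p.1) < 1 :=
    (le_iSup (fun N : ℕ => ⨅ (E : Set (X × ℕ)) (_ : IsBowenCover f univ N δ E),
      coverSum E fun p => -(p.2 : ℝ) * s + birk f ψ p.2 p.1) 1).trans_lt
      (h.trans_lt zero_lt_one)
  simp only [iInf_lt_iff] at h1
  obtain ⟨E, ⟨-, hE, hcov⟩, hsum⟩ := h1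
  obtain ⟨b, hbE, hbfin, hb⟩ := isCompact_univ.elim_finite_subcover_image
    (fun p _ => isOpen_bowenBall hf p.1 p.2 δ) hcov
  refine ⟨hbfin.toFinset, fun p hp => (hE p (hbE (hbfin.mem_toFinset.1 hp))).2, fun x => ?_, ?_⟩
  · obtain ⟨p, hp, hx⟩ := mem_iUnion₂.1 (hb (mem_univ x))
    exact ⟨p, hbfin.mem_toFinset.2 hp, hx⟩
  · rw [← ENNReal.ofReal_le_one, ENNReal.ofReal_sum_of_nonneg fun _ _ => (Real.exp_pos _).le]
    have h2 := Finset.tsum_subtype' hbfin.toFinset (fun p : X × ℕ =>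
      ENNReal.ofReal (Real.exp (-(p.2 : ℝ) * s + birk f ψ p.2 p.1)))
    rw [← h2]
    refine le_trans (ENNReal.tsum_mono_subtype (t := E) (fun p : X × ℕ =>
      ENNReal.ofReal (Real.exp (-(p.2 : ℝ) * s + birk f ψ p.2 p.1))) ?_) hsum.le
    rw [hbfin.coe_toFinset]; exact hbE

/-- Concatenation estimate. Let `Γ` be a finite cover of the space by Bowen balls of total weight at
most one. Any set `Y` on which `S_nψ - n(s + η) ≥ c` splits into at most `e^{D-c}` pieces that
are small in the `n`-th Bowen metric: a piece follows one element `(x, m)` of `Γ` for time `m` and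
then, by induction, a piece for the remaining time `n - m`. The constant `D` absorbs the overshoot
of the last element past time `n`. -/
lemma exists_small_cover {f : X → X} {ψ : X → ℝ} {s δ η C : ℝ} {M : ℕ} (hη : 0 ≤ η)
    (hC : ∀ x, |ψ x| ≤ C) (hvar : ∀ x y, dist x y < δ → |ψ x - ψ y| ≤ η)
    (Γ : Finset (X × ℕ)) (hΓ1 : ∀ p ∈ Γ, 1 ≤ p.2) (hΓM : ∀ p ∈ Γ, p.2 ≤ M)
    (hcov : ∀ x, ∃ p ∈ Γ, x ∈ bowenBall f p.1 p.2 δ)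
    (hsum : ∑ p ∈ Γ, Real.exp (-(p.2 : ℝ) * s + birk f ψ p.2 p.1) ≤ 1) (n : ℕ) :
    ∀ (Y : Set X) (c : ℝ), (∀ y ∈ Y, c ≤ birk f ψ n y - n * (s + η)) →
      ∃ F : Finset (Set X), (∀ T ∈ F, BowenSmall f n (2 * δ) T) ∧
        (∀ y ∈ Y, ∃ T ∈ F, y ∈ T) ∧
        (F.card : ℝ) ≤ Real.exp (2 * M * (C + |s|) - c) := by
  classical
  induction n using Nat.strong_induction_on with
  | _ n ih =>
  intro Y c hY
  have hstep : ∀ p ∈ Γ, ∃ F : Finset (Set X), (∀ T ∈ F, BowenSmall f n (2 * δ) T) ∧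
      (∀ y ∈ Y ∩ bowenBall f p.1 p.2 δ, ∃ T ∈ F, y ∈ T) ∧
      (F.card : ℝ) ≤ Real.exp (2 * M * (C + |s|) - c) *
        Real.exp (-(p.2 : ℝ) * s + birk f ψ p.2 p.1) := by
    intro p hp
    rw [← Real.exp_add]
    rcases le_or_gt n p.2 with hnp | hnp
    · rcases (Y ∩ bowenBall f p.1 p.2 δ).eq_empty_or_nonempty with hemp | ⟨y, hy⟩
      · refine ⟨∅, by simp, by simp [hemp], ?_⟩
        simp only [Finset.card_empty, Nat.cast_zero]; positivity
      · refine ⟨{bowenBall f p.1 p.2 δ}, ?_, ?_, ?_⟩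
        · intro T hT
          rw [Finset.mem_singleton.1 hT]
          exact fun y hy z hz k hk =>
            bowenSmall_bowenBall f p.1 p.2 δ y hy z hz k (hk.trans_le hnp)
        · exact fun z hz => ⟨_, Finset.mem_singleton_self _, hz.2⟩
        · rw [Finset.card_singleton, Nat.cast_one]
          refine Real.one_le_exp ?_
          have h1 := hY y hy.1
          have h2 := abs_le.1 (abs_birk_le (f := f) hC n y)
          have h3 := abs_le.1 (abs_birk_le (f := f) hC p.2 p.1)
          have hpM : (p.2 : ℝ) ≤ M := by exact_mod_cast hΓM p hp
          have hnM : (n : ℝ) ≤ M := le_trans (by exact_mod_cast hnp) hpM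
          have hC0 : 0 ≤ C := (abs_nonneg _).trans (hC y)
          have h4 : (n : ℝ) * C ≤ M * C := mul_le_mul_of_nonneg_right hnM hC0
          have h5 : (p.2 : ℝ) * C ≤ M * C := mul_le_mul_of_nonneg_right hpM hC0
          have h6 : (p.2 : ℝ) * s ≤ M * |s| :=
            (mul_le_mul_of_nonneg_left (le_abs_self s) (Nat.cast_nonneg _)).trans
              (mul_le_mul_of_nonneg_right hpM (abs_nonneg s))
          have h7 : (n : ℝ) * (-s) ≤ M * |s| :=
            (mul_le_mul_of_nonneg_left (neg_le_abs s) (Nat.cast_nonneg _)).trans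
              (mul_le_mul_of_nonneg_right hnM (abs_nonneg s))
          have h8 : 0 ≤ (n : ℝ) * η := mul_nonneg (Nat.cast_nonneg _) hη
          linarith
    · -- Apply the induction hypothesis to the image of the piece under `f^[p.2]`.
      obtain ⟨r, rfl⟩ := Nat.exists_eq_add_of_le hnp.le
      have hr : r < p.2 + r := by have := hΓ1 p hp; omega
      obtain ⟨F, hFs, hFc, hFcard⟩ := ih r hr (f^[p.2] '' (Y ∩ bowenBall f p.1 p.2 δ))
        (c - (-(p.2 : ℝ) * s + birk f ψ p.2 p.1)) (by
          rintro _ ⟨y, ⟨hyY, hyB⟩, rfl⟩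
          have h1 := hY y hyY
          rw [birk_add] at h1
          have h2 : birk f ψ p.2 y ≤ birk f ψ p.2 p.1 + p.2 * η := by
            have : birk f ψ p.2 y ≤ ∑ k ∈ Finset.range p.2, (ψ (f^[k] p.1) + η) := by
              refine Finset.sum_le_sum fun k hk => ?_
              have := abs_le.1 (hvar _ _ (hyB k (Finset.mem_range.1 hk)))
              linarith
            refine this.trans (le_of_eq ?_)
            simp [Finset.sum_add_distrib, birk]
          push_cast at h1
          linarith)
      refine ⟨F.image fun T => bowenBall f p.1 p.2 δ ∩ f^[p.2] ⁻¹' T, ?_, ?_, ?_⟩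
      · intro T' hT'
        obtain ⟨T, hT, rfl⟩ := Finset.mem_image.1 hT'
        rintro y ⟨hyB, hyT⟩ z ⟨hzB, hzT⟩ k hk
        rcases lt_or_ge k p.2 with hkp | hkp
        · exact bowenSmall_bowenBall f p.1 p.2 δ y hyB z hzB k hkp
        · obtain ⟨j, rfl⟩ := Nat.exists_eq_add_of_le' hkp
          rw [Function.iterate_add_apply, Function.iterate_add_apply]
          exact hFs T hT _ hyT _ hzT j (by omega)
      · intro y hy
        obtain ⟨T, hT, hyT⟩ := hFc _ ⟨y, hy, rfl⟩
        exact ⟨_, Finset.mem_image_of_mem _ hT, hy.2, hyT⟩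
      · refine le_trans (by exact_mod_cast Finset.card_image_le) (hFcard.trans (le_of_eq ?_))
        congr 1; ring
  choose! F hFs hFc hFcard using hstep
  refine ⟨Γ.biUnion F, ?_, ?_, ?_⟩
  · intro T hT
    obtain ⟨p, hp, hTp⟩ := Finset.mem_biUnion.1 hT
    exact hFs p hp T hTp
  · intro y hy
    obtain ⟨p, hp, hyp⟩ := hcov y
    obtain ⟨T, hT, hyT⟩ := hFc p hp y ⟨hy, hyp⟩
    exact ⟨T, Finset.mem_biUnion.2 ⟨p, hp, hT⟩, hyT⟩
  · calc ((Γ.biUnion F).card : ℝ) ≤ ∑ p ∈ Γ, ((F p).card : ℝ) := by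
          exact_mod_cast Finset.card_biUnion_le
      _ ≤ ∑ p ∈ Γ, Real.exp (2 * M * (C + |s|) - c) *
            Real.exp (-(p.2 : ℝ) * s + birk f ψ p.2 p.1) :=
          Finset.sum_le_sum fun p hp => hFcard p hp
      _ ≤ Real.exp (2 * M * (C + |s|) - c) := by
          rw [← Finset.mul_sum]
          exact mul_le_of_le_one_right (Real.exp_pos _).le hsum

lemma exists_real_lt_of_pressure_lt {f : X → X} {Z : Set X} {ψ : X → ℝ} {s : ℝ}
    (h : pressure f Z ψ < s) {δ : ℝ} (hδ : 0 < δ) : ∃ s' < s, mP f Z s' ψ δ = 0 := by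
  have h1 : pressureAt f Z ψ δ < s :=
    (le_iSup₂ (f := fun (δ : ℝ) (_ : 0 < δ) => pressureAt f Z ψ δ) δ hδ).trans_lt h
  obtain ⟨_, ⟨s', hs', rfl⟩, hlt⟩ := sInf_lt_iff.1 h1
  exact ⟨s', EReal.coe_lt_coe_iff.1 hlt, hs'⟩

/-- The exponential growth rate of `Λ_n^δ(U)` on a small neighbourhood `U` of `α`. On `G_n(U)` the
sums `S_n(qφ)` are at least `n(qα - |q|r)`, which turns the weighted count into a plain one. -/
lemma limsup_elogn_Lam_le [CompactSpace X] {f : X → X} (hf : Continuous f) {φ : X → ℝ}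
    (hφ : Continuous φ) {α q s κ r : ℝ} (hκ : 0 < κ) (hr : |q| * r ≤ κ / 2)
    (hs : pressure f univ (fun x => q * φ x) < s) {ε : ℝ} (hε : 0 < ε) :
    limsup (fun n : ℕ => elogn (Lam f φ n ε (Metric.ball α r)) n) atTop
      ≤ ((s - q * α + κ : ℝ) : EReal) := by
  have hψ : Continuous fun x => q * φ x := continuous_const.mul hφ
  obtain ⟨C, hC⟩ := isCompact_univ.exists_bound_of_continuousOn hψ.continuousOn
  obtain ⟨δ₀, hδ₀, hvar⟩ := Metric.uniformContinuous_iff.1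
    (CompactSpace.uniformContinuous_of_continuous hψ) (κ / 4) (by positivity)
  set δ := min δ₀ (ε / 2) with hδdef
  have hδ : 0 < δ := lt_min hδ₀ (half_pos hε)
  have hδε : 2 * δ ≤ ε := by have := min_le_right δ₀ (ε / 2); linarith
  obtain ⟨s', hs's, hmP⟩ := exists_real_lt_of_pressure_lt hs hδ
  obtain ⟨Γ, hΓ1, hΓcov, hΓsum⟩ := exists_finite_cover_of_mP_eq_zero hf hmP
  set M := Γ.sup Prod.snd
  set D : ℝ := 2 * M * (C + |s'|)
  have hD : ∀ᶠ n : ℕ in atTop, D ≤ n * (κ / 4) :=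
    (tendsto_natCast_atTop_atTop.atTop_mul_const (by positivity : 0 < κ / 4)).eventually_ge_atTop D
  refine limsup_le_of_le (h := ?_)
  filter_upwards [hD, eventually_gt_atTop 0] with n hDn hn
  have hn' : (0 : ℝ) < n := by exact_mod_cast hn
  obtain ⟨F, hFs, hFc, hFcard⟩ := exists_small_cover (η := κ / 4) (M := M) (by positivity)
    (fun x => hC x (mem_univ x))
    (fun x y hxy => (hvar (hxy.trans_le (min_le_left _ _))).le) Γ hΓ1
    (fun p hp => Finset.le_sup (f := Prod.snd) hp) hΓcov hΓsum n
    (Gset f φ n (Metric.ball α r)) (n * (q * α - κ / 2) - n * (s' + κ / 4)) (by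
      intro y hy
      have h1 : |birk f φ n y / n - α| < r := by
        have : birk f φ n y / n ∈ Metric.ball α r := hy
        rwa [Metric.mem_ball, Real.dist_eq] at this
      have h2 : |q * (birk f φ n y / n - α)| ≤ κ / 2 := by
        rw [abs_mul]
        exact (mul_le_mul_of_nonneg_left h1.le (abs_nonneg q)).trans hr
      have h3 := mul_le_mul_of_nonneg_left (abs_le.1 h2).1 hn'.le
      have h4 : (n : ℝ) * (q * (birk f φ n y / n - α)) = q * birk f φ n y - n * (q * α) := by
        field_simp
      rw [birk_const_mul]
      linarith)
  refine elogn_le hn ?_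
  have hle : (Lam f φ n ε (Metric.ball α r) : ℝ) ≤ F.card := by
    exact_mod_cast Lam_le_card F
      (fun T hT y hy z hz k hk => (hFs T hT y hy z hz k hk).trans_le hδε) hFc
  refine hle.trans (hFcard.trans (Real.exp_le_exp.2 ?_))
  have h5 : (n : ℝ) * s' ≤ n * s := mul_le_mul_of_nonneg_left hs's.le hn'.le
  change D - _ ≤ _
  linarith

lemma uFspec_le [CompactSpace X] {f : X → X} (hf : Continuous f) {φ : X → ℝ}
    (hφ : Continuous φ) (α q : ℝ) :
    uFspec f φ α ≤ pressure f univ (fun x => q * φ x) - ((q * α : ℝ) : EReal) := by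
  refine EReal.le_of_forall_lt_iff_le.1 fun t ht => ?_
  have hP : pressure f univ (fun x => q * φ x) < ((t + q * α : ℝ) : EReal) := by
    rw [EReal.coe_add]
    exact (EReal.sub_lt_iff (Or.inl (EReal.coe_ne_bot _)) (Or.inl (EReal.coe_ne_top _))).1 ht
  obtain ⟨s, hs, hst⟩ := EReal.lt_iff_exists_real_btwn.1 hP
  have hst' := EReal.coe_lt_coe_iff.1 hst
  set κ := t + q * α - s with hκdef
  have hκ : 0 < κ := sub_pos.2 hst'
  -- Adding one keeps the radius meaningful when `q = 0`.
  have hr : 0 < κ / 2 / (|q| + 1) := by positivity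
  have hqr : |q| * (κ / 2 / (|q| + 1)) ≤ κ / 2 := by
    rw [mul_div_assoc', div_le_iff₀ (by positivity)]
    nlinarith [abs_nonneg q]
  refine (iInf₂_le (Metric.ball α (κ / 2 / (|q| + 1))) (Metric.ball_mem_nhds α hr)).trans
    (iSup₂_le fun ε hε => ?_)
  refine (limsup_elogn_Lam_le hf hφ hκ hqr hs hε).trans (le_of_eq ?_)
  congr 1; rw [hκdef]; ring

/-! ### The chain of inequalities -/

/-- Theorem E: fine ≤ lower coarse ≤ upper coarse ≤ predicted.
For all `α ∈ ℝ`, `F(α) ≤ lF(α) ≤ uF(α) ≤ S(α)`, where `F(α) = h_top(K_α^φ)` and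
`S(α) = inf_q (P(qφ) - qα)`. -/
theorem coarse_spectra_bounds {X : Type*} [MetricSpace X] [CompactSpace X]
    (f : X → X) (hf : Continuous f) (hfin : FiniteHtop f)
    (φ : X → ℝ) (hφ : Continuous φ) (α : ℝ) :
    pressure f (Kbirk f φ α) (fun _ => 0) ≤ lFspec f φ α ∧
    lFspec f φ α ≤ uFspec f φ α ∧
    uFspec f φ α
      ≤ ⨅ q : ℝ, (pressure f univ (fun x => q * φ x) - ((q * α : ℝ) : EReal)) := by
  exact ⟨fine_le_lFspec hf φ α, lFspec_le_uFspec f φ α, le_iInf fun q => uFspec_le hf hφ α q⟩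
end Multifractal
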